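/- arXiv:2208.09755 — 3 statements merged into one kernel-verified Lean document; each statement's English description precedes it below -/
import Mathlib

section
/- Let T > 0, Q_T = (0,∞)×(0,T), and let n be a nonnegative solution of the Kompaneets equation on Q_T that is bounded on Q_T, with initial data n₀ satisfying x² n₀(x) → 0 as x → ∞. Then for every x ∈ (0,∞), every t ∈ (0,T], and every α ≥ √(6‖n‖_{L∞(Q_T)} + 1) − 1, one has ∂ₓ n(x,t) ≥ −1/(2t) − 5x/2 − α/2 (Oleinik-type one-sided slope bound). -/
/-!
The slope bound says that `n(·,t) + Φ(·,t)` is nondecreasing, where `∂ₓΦ = 1/(2t) + 5x/2 + α/2`.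
Since only `n`, and not `∂ₓ n`, is known to be jointly continuous, the maximum principle is applied
to the two-point function `Z(x,y,t) = (n + Φ)(y,t) - (n + Φ)(x,t)`, `x ≤ y`, instead of to `∂ₓ n`.

Two modifications of `Φ` remove the behaviour of the solution at the boundary of the domain. Time
is shifted, `t` being replaced by `τ = t - t₀` with `t₀ > 0`, so that the term `1/(2τ)` dominates
at the initial time `t₀`. At `x = 0`, where nothing is known about `n`, a barrier of
Keller–Osserman type `B/(x-δ)²` with `B = (3 + 4T)δ²` is added to `∂ₓΦ` on `x > δ`; it blows up at
`x = δ` and vanishes as `δ → 0`. At infinity the decay of `n` and the term `5x/2` suffice.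

Uniform continuity of `n` then shows `Z ≥ -ε` on the boundary of a compact region
(`two_point_bound`). At an interior minimum with `Z < 0` the first derivatives of `n + Φ` vanish at
both points and the second derivatives have the favourable signs, so that the equation gives
`∂ₜZ ≥ F(y, V + Z) - F(x, V)` with `V = (n + Φ)(x)` and an explicit `F` (`forcing`). The function
`F` is nondecreasing in its first argument for the relevant values (`forcing_mono`; this is where
`(α + 1)² ≥ 6M + 1` enters), and `F(y, V + Z) > F(y, V)`; hence `∂ₜZ > 0`, which is impossible at
a minimum (`no_interior_min`). Letting `t₀, δ, ε → 0` gives the monotonicity of `n + Φ`.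
-/

open MeasureTheory Filter Set Real Topology

/-- The Kompaneets photon flux `J(x,u) = x² u'(x) + (x² - 2x) u(x) + u(x)²`. -/
noncomputable def kompFlux (u : ℝ → ℝ) (x : ℝ) : ℝ :=
  x ^ 2 * deriv u x + (x ^ 2 - 2 * x) * u x + u x ^ 2

/-- A nonnegative solution of the Kompaneets equation
`∂ₜ n = ∂ₓ J(x, n(·,t))` on `Q_T = (0,∞) × (0,T)` (conditions stated for
`0 < t ≤ T`) with initial data `n₀`; no boundary condition at `x = 0`. -/
structure IsKompSolOn (n : ℝ → ℝ → ℝ) (n₀ : ℝ → ℝ) (T : ℝ) : Prop where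
  nonneg : ∀ x t : ℝ, 0 < x → 0 < t → t ≤ T → 0 ≤ n x t
  init : ∀ x : ℝ, 0 < x → n x 0 = n₀ x
  contOn : ContinuousOn (fun p : ℝ × ℝ => n p.1 p.2)
    ((Set.Ioi (0:ℝ)) ×ˢ (Set.Ioc (0:ℝ) T))
  diff_x : ∀ t : ℝ, 0 < t → t ≤ T → ∀ x : ℝ, 0 < x →
    DifferentiableAt ℝ (fun y => n y t) x
  diff_xx : ∀ t : ℝ, 0 < t → t ≤ T → ∀ x : ℝ, 0 < x →
    DifferentiableAt ℝ (deriv (fun y => n y t)) x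
  diff_t : ∀ x : ℝ, 0 < x → ∀ t : ℝ, 0 < t → t ≤ T →
    DifferentiableAt ℝ (fun τ => n x τ) t
  pde : ∀ x : ℝ, 0 < x → ∀ t : ℝ, 0 < t → t ≤ T →
    deriv (fun τ => n x τ) t = deriv (fun y => kompFlux (fun z => n z t) y) x
  l1init : Filter.Tendsto (fun t => ∫ x in Set.Ioi (0:ℝ), |n x t - n₀ x|)
    (𝓝[>] (0:ℝ)) (nhds 0)
  decay : ∀ ε : ℝ, 0 < ε → ∃ R : ℝ, 0 < R ∧
    ∀ x : ℝ, R ≤ x → ∀ t : ℝ, 0 ≤ t → t ≤ T → x ^ 2 * n x t < ε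
  decay' : ∀ ε : ℝ, 0 < ε → ∃ R : ℝ, 0 < R ∧
    ∀ x : ℝ, R ≤ x → ∀ t : ℝ, 1 / x ^ 2 ≤ t → t ≤ T →
      |x ^ 2 * deriv (fun y => n y t) x| < ε

/-! ### The barrier and its forcing term -/

/-- The primitive in `z` of `barrierSlope`. -/
noncomputable def barrier (B δ α τ z : ℝ) : ℝ :=
  z / (2 * τ) + 5 * z ^ 2 / 4 + α * z / 2 - B / (z - δ)

/-- The negative of the lower bound for the slope, with the singular term `B/(z-δ)²` added. -/
noncomputable def barrierSlope (B δ α τ z : ℝ) : ℝ :=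
  1 / (2 * τ) + 5 * z / 2 + α / 2 + B / (z - δ) ^ 2

/-- The value of `∂ₜ(n + Φ)` prescribed by the equation at a point `z` where `n + Φ = V`,
`∂ₓ(n + Φ) = 0` and `∂ₓ²(n + Φ) = 0`, for `Φ` the barrier. -/
noncomputable def forcing (B δ α τ V z : ℝ) : ℝ :=
  -z / (2 * τ ^ 2) - z ^ 2 * (5 / 2 - 2 * B / (z - δ) ^ 3) - z ^ 2 * barrierSlope B δ α τ z
    - 2 * (V - barrier B δ α τ z) * barrierSlope B δ α τ z
    + (2 * z - 2) * (V - barrier B δ α τ z)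

lemma hasDerivAt_barrier {B δ α τ z : ℝ} (hz : δ < z) :
    HasDerivAt (fun z => barrier B δ α τ z) (barrierSlope B δ α τ z) z := by
  have h1 : z - δ ≠ 0 := (sub_pos.2 hz).ne'
  have h2 := (((hasDerivAt_id z).div_const (2 * τ)).add
    ((((hasDerivAt_id z).pow 2).const_mul 5).div_const 4)).add
    (((hasDerivAt_id z).const_mul α).div_const 2)
  have h3 := h2.sub (((hasDerivAt_const z B).div ((hasDerivAt_id z).sub_const δ) h1))
  refine h3.congr_deriv ?_
  simp only [barrierSlope, id]
  field_simp
  ring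

lemma hasDerivAt_barrierSlope {B δ α τ z : ℝ} (hz : δ < z) :
    HasDerivAt (fun z => barrierSlope B δ α τ z) (5 / 2 - 2 * B / (z - δ) ^ 3) z := by
  have h1 : z - δ ≠ 0 := (sub_pos.2 hz).ne'
  have h2 := ((((hasDerivAt_id z).const_mul 5).div_const 2).const_add (1 / (2 * τ))).add_const
    (α / 2)
  have h3 := h2.add (((hasDerivAt_const z B).div (((hasDerivAt_id z).sub_const δ).pow 2)
    (pow_ne_zero 2 h1)))
  refine h3.congr_deriv ?_
  simp only [id, Pi.pow_apply]
  field_simp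
  ring

lemma hasDerivAt_barrier_time {B δ α t₀ t z : ℝ} (ht : t₀ < t) :
    HasDerivAt (fun s => barrier B δ α (s - t₀) z) (-z / (2 * (t - t₀) ^ 2)) t := by
  have h1 : t - t₀ ≠ 0 := (sub_pos.2 ht).ne'
  have h2 := (((hasDerivAt_const t z).div (((hasDerivAt_id t).sub_const t₀).const_mul 2)
    (mul_ne_zero two_ne_zero h1)).add_const (5 * z ^ 2 / 4)).add_const (α * z / 2)
  have h3 := h2.sub_const (B / (z - δ))
  refine h3.congr_deriv ?_
  simp only [id]
  field_simp
  ring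

lemma barrierSlope_pos {B δ α τ z : ℝ} (hB : 0 ≤ B) (hα : 0 ≤ α) (hτ : 0 < τ) (hz : 0 < z) :
    0 < barrierSlope B δ α τ z := by
  unfold barrierSlope
  positivity

/-- The algebraic inequality behind `forcing_mono`, with `p = 1/τ`, `q = 1/(z-δ)` and `N` the
value of `n`. The right-hand side is the derivative of `forcing` in `z`. -/
lemma forcing_deriv_nonneg {T M δ α p q z N : ℝ} (hT : 0 < T) (hδ : 0 < δ) (hα : 0 ≤ α)
    (hαM : 6 * M ≤ α ^ 2 + 2 * α) (hp : 1 ≤ p * T) (hp0 : 0 < p) (hq : 0 < q) (hz : 0 < z)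
    (hzq : z * q = 1 + δ * q) (hN : 0 ≤ N) (hNM : N ≤ M) (B : ℝ) (hB : B = (3 + 4 * T) * δ ^ 2) :
    0 ≤ -p ^ 2 / 2 - 2 * z * (5 / 2 - 2 * B * q ^ 3) - z ^ 2 * (6 * B * q ^ 4)
      - 2 * z * (p / 2 + 5 * z / 2 + α / 2 + B * q ^ 2) - z ^ 2 * (5 / 2 - 2 * B * q ^ 3)
      + 2 * (p / 2 + 5 * z / 2 + α / 2 + B * q ^ 2) ^ 2 - 2 * N * (5 / 2 - 2 * B * q ^ 3)
      + 2 * N - (2 * z - 2) * (p / 2 + 5 * z / 2 + α / 2 + B * q ^ 2) := by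
  have hB0 : 0 ≤ B := by rw [hB]; positivity
  have key : 0 ≤ 2 * p + 8 * T * δ ^ 2 * q ^ 2 - 8 * δ * q := by
    have h : 0 ≤ T * (2 * p + 8 * T * δ ^ 2 * q ^ 2 - 8 * δ * q) := by
      nlinarith [sq_nonneg (1 - 2 * T * δ * q)]
    exact nonneg_of_mul_nonneg_right h hT
  have e : -p ^ 2 / 2 - 2 * z * (5 / 2 - 2 * B * q ^ 3) - z ^ 2 * (6 * B * q ^ 4)
      - 2 * z * (p / 2 + 5 * z / 2 + α / 2 + B * q ^ 2) - z ^ 2 * (5 / 2 - 2 * B * q ^ 3)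
      + 2 * (p / 2 + 5 * z / 2 + α / 2 + B * q ^ 2) ^ 2 - 2 * N * (5 / 2 - 2 * B * q ^ 3)
      + 2 * N - (2 * z - 2) * (p / 2 + 5 * z / 2 + α / 2 + B * q ^ 2)
      = p * (3 * z + α + 1) + 3 * α * z + (α ^ 2 / 2 + α - 3 * N) + 4 * N * B * q ^ 3
        + 2 * B * q ^ 3 * z ^ 2
        + B * q ^ 2 * (2 * B * q ^ 2 + 6 * z + 2 * α + 2 * p + 2 + 4 * (z * q)
          - 6 * (z * q) ^ 2) := by ring
  rw [e, hzq]
  have e2 : 2 * B * q ^ 2 + 6 * z + 2 * α + 2 * p + 2 + 4 * (1 + δ * q) - 6 * (1 + δ * q) ^ 2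
      = 6 * z + 2 * α + (2 * p + 8 * T * δ ^ 2 * q ^ 2 - 8 * δ * q) := by rw [hB]; ring
  rw [e2]
  have h3 : 0 ≤ α ^ 2 / 2 + α - 3 * N := by linarith
  positivity

lemma barrier_mono {B δ α τ : ℝ} (hB : 0 ≤ B) (hα : 0 ≤ α) (hτ : 0 < τ) (hδ : 0 < δ) {x y : ℝ}
    (hx : δ < x) (hxy : x ≤ y) : barrier B δ α τ x ≤ barrier B δ α τ y := by
  have : MonotoneOn (fun z => barrier B δ α τ z) (Icc x y) := by
    refine monotoneOn_of_hasDerivWithinAt_nonneg (f' := fun z => barrierSlope B δ α τ z)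
      (convex_Icc x y) ?_ ?_ ?_
    · intro z hz
      exact (hasDerivAt_barrier (lt_of_lt_of_le hx hz.1)).continuousAt.continuousWithinAt
    · intro z hz
      rw [interior_Icc] at hz
      exact (hasDerivAt_barrier (hx.trans hz.1)).hasDerivWithinAt
    · intro z hz
      rw [interior_Icc] at hz
      exact (barrierSlope_pos hB hα hτ (hδ.trans (hx.trans hz.1))).le
  exact this (left_mem_Icc.2 hxy) (right_mem_Icc.2 hxy) hxy

lemma forcing_mono {T M δ α τ V B x y : ℝ} (hT : 0 < T) (hδ : 0 < δ) (hα : 0 ≤ α)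
    (hαM : 6 * M ≤ α ^ 2 + 2 * α) (hτ : 0 < τ) (hτT : τ ≤ T) (hB : B = (3 + 4 * T) * δ ^ 2)
    (hx : δ < x) (hxy : x ≤ y) (hVx : V - barrier B δ α τ x ≤ M)
    (hVy : 0 ≤ V - barrier B δ α τ y) :
    forcing B δ α τ V x ≤ forcing B δ α τ V y := by
  have hB0 : 0 ≤ B := by rw [hB]; positivity
  have hd : ∀ z, δ < z → HasDerivAt (fun z => forcing B δ α τ V z)
      (-(1/τ) ^ 2 / 2 - 2 * z * (5 / 2 - 2 * B * (1/(z-δ)) ^ 3) - z ^ 2 * (6 * B * (1/(z-δ)) ^ 4)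
      - 2 * z * ((1/τ) / 2 + 5 * z / 2 + α / 2 + B * (1/(z-δ)) ^ 2)
      - z ^ 2 * (5 / 2 - 2 * B * (1/(z-δ)) ^ 3)
      + 2 * ((1/τ) / 2 + 5 * z / 2 + α / 2 + B * (1/(z-δ)) ^ 2) ^ 2
      - 2 * (V - barrier B δ α τ z) * (5 / 2 - 2 * B * (1/(z-δ)) ^ 3)
      + 2 * (V - barrier B δ α τ z)
      - (2 * z - 2) * ((1/τ) / 2 + 5 * z / 2 + α / 2 + B * (1/(z-δ)) ^ 2)) z := by
    intro z hz
    have h1 : z - δ ≠ 0 := (sub_pos.2 hz).ne'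
    have hb := (hasDerivAt_barrier (B := B) (α := α) (τ := τ) hz).const_sub V
    have hs := hasDerivAt_barrierSlope (B := B) (α := α) (τ := τ) hz
    have hss : HasDerivAt (fun z => 5 / 2 - 2 * B / (z - δ) ^ 3) (6 * B / (z - δ) ^ 4) z := by
      have h3 := (((hasDerivAt_const z (2 * B)).div (((hasDerivAt_id z).sub_const δ).pow 3)
        (pow_ne_zero 3 h1))).const_sub (5 / 2)
      refine h3.congr_deriv ?_
      simp only [id, Pi.pow_apply]
      field_simp
      ring
    have hz2 : HasDerivAt (fun z : ℝ => z ^ 2) (2 * z) z := by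
      simpa using hasDerivAt_pow 2 z
    have hl : HasDerivAt (fun z : ℝ => 2 * z - 2) 2 z := by
      simpa using ((hasDerivAt_id z).const_mul 2).sub_const 2
    have h5 := (((((hasDerivAt_id z).neg.div_const (2 * τ ^ 2)).sub (hz2.mul hss)).sub
      (hz2.mul hs)).sub ((hb.const_mul 2).mul hs)).add (hl.mul hb)
    refine h5.congr_deriv ?_
    have e : barrierSlope B δ α τ z
        = (1/τ) / 2 + 5 * z / 2 + α / 2 + B * (1/(z-δ)) ^ 2 := by
      unfold barrierSlope
      field_simp
    simp only [e]
    field_simp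
    ring
  have : MonotoneOn (fun z => forcing B δ α τ V z) (Icc x y) := by
    refine monotoneOn_of_hasDerivWithinAt_nonneg (convex_Icc x y) ?_
      (fun z hz => (hd z ?_).hasDerivWithinAt) ?_
    · intro z hz
      exact (hd z (lt_of_lt_of_le hx hz.1)).continuousAt.continuousWithinAt
    · rw [interior_Icc] at hz
      exact hx.trans hz.1
    · intro z hz
      rw [interior_Icc] at hz
      have hzδ : δ < z := hx.trans hz.1
      have h1 : 0 < z - δ := sub_pos.2 hzδ
      refine forcing_deriv_nonneg hT hδ hα hαM ?_ (by positivity) (by positivity)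
        (hδ.trans hzδ) ?_ ?_ ?_ B hB
      · rw [one_div, inv_mul_eq_div]
        exact (one_le_div hτ).2 hτT
      · field_simp
        ring
      · have := barrier_mono hB0 hα hτ hδ hzδ hz.2.le
        linarith
      · have := barrier_mono hB0 hα hτ hδ hx hz.1.le
        linarith
  exact this (left_mem_Icc.2 hxy) (right_mem_Icc.2 hxy) hxy

/-! ### Interior minima of the two-point function -/

/-- Necessary first and second order conditions at a local minimum. -/
lemma second_deriv_nonneg_of_isLocalMin {f f' : ℝ → ℝ} {f'' y : ℝ}
    (h : ∀ᶠ z in 𝓝 y, HasDerivAt f (f' z) z) (h2 : HasDerivAt f' f'' y) (hm : IsLocalMin f y) :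
    f' y = 0 ∧ 0 ≤ f'' := by
  have h1 := h.self_of_nhds
  have h0 : f' y = 0 := hm.hasDerivAt_eq_zero h1
  refine ⟨h0, ?_⟩
  by_contra! hneg
  have hd : deriv f =ᶠ[𝓝 y] f' := h.mono fun z hz => hz.deriv
  have hdd : deriv (deriv f) y = f'' := by rw [hd.deriv_eq, h2.deriv]
  have hmax : IsLocalMax f y := isLocalMax_of_deriv_deriv_neg (by rw [hdd]; exact hneg)
    (by rw [h1.deriv, h0]) h1.continuousAt
  -- A point that is both a local minimum and a local maximum has `f` constant around it.
  have hc : f =ᶠ[𝓝 y] fun _ => f y := by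
    filter_upwards [hm, hmax] with z a b using le_antisymm b a
  have hc' : deriv f =ᶠ[𝓝 y] fun _ => 0 := by
    simpa using hc.deriv
  have : deriv (deriv f) y = 0 := by rw [hc'.deriv_eq]; simp
  rw [hdd] at this
  linarith

/-- The equation in nondivergence form. -/
lemma IsKompSolOn.hasDerivAt_time {n : ℝ → ℝ → ℝ} {n₀ : ℝ → ℝ} {T : ℝ} (h : IsKompSolOn n n₀ T)
    {x t : ℝ} (hx : 0 < x) (ht : 0 < t) (htT : t ≤ T) :
    HasDerivAt (fun τ => n x τ) (x ^ 2 * deriv (deriv (fun y => n y t)) x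
      + (x ^ 2 + 2 * n x t) * deriv (fun y => n y t) x + (2 * x - 2) * n x t) t := by
  have h1 := (h.diff_t x hx t ht htT).hasDerivAt
  rw [h.pde x hx t ht htT] at h1
  refine h1.congr_deriv ?_
  have a := (h.diff_x t ht htT x hx).hasDerivAt
  have b := (h.diff_xx t ht htT x hx).hasDerivAt
  have hz2 : HasDerivAt (fun z : ℝ => z ^ 2) (2 * x) x := by
    simpa using hasDerivAt_pow 2 x
  have hl : HasDerivAt (fun z : ℝ => z ^ 2 - 2 * z) (2 * x - 2) x := by
    have h3 := hz2.sub ((hasDerivAt_id x).const_mul 2)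
    rw [mul_one] at h3
    exact h3
  have c := ((hz2.mul b).add (hl.mul a)).add (a.pow 2)
  have d : HasDerivAt (fun y => kompFlux (fun z => n z t) y) _ x := c
  rw [d.deriv]
  simp
  ring

/-- A minimum of the two-point function, over nearby points at the same time and over slightly
earlier times, cannot have a negative value off the diagonal. -/
lemma no_interior_min {n : ℝ → ℝ → ℝ} {n₀ : ℝ → ℝ} {T : ℝ} (h : IsKompSolOn n n₀ T)
    {M δ α B t₀ t x y : ℝ} (hδ : 0 < δ) (hα : 0 ≤ α)
    (hαM : 6 * M ≤ α ^ 2 + 2 * α) (hB : B = (3 + 4 * T) * δ ^ 2) (ht₀ : 0 < t₀) (ht : t₀ < t)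
    (htT : t ≤ T) (hM : n x t ≤ M) (hx : δ < x) (hxy : x < y)
    (hneg : n y t + barrier B δ α (t - t₀) y - (n x t + barrier B δ α (t - t₀) x) < 0)
    (hminy : IsLocalMin (fun z => n z t + barrier B δ α (t - t₀) z) y)
    (hmaxx : IsLocalMax (fun z => n z t + barrier B δ α (t - t₀) z) x)
    (hmint : ∀ᶠ s in 𝓝[<] t,
      n y t + barrier B δ α (t - t₀) y - (n x t + barrier B δ α (t - t₀) x)
      ≤ n y s + barrier B δ α (s - t₀) y - (n x s + barrier B δ α (s - t₀) x)) : False := by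
  have htp : 0 < t := ht₀.trans ht
  have hT : 0 < T := htp.trans_le htT
  have hτ : 0 < t - t₀ := sub_pos.2 ht
  have hB0 : 0 ≤ B := by rw [hB]; positivity
  have hx0 : 0 < x := hδ.trans hx
  have hy0 : 0 < y := hx0.trans hxy
  have hy : δ < y := hx.trans hxy
  set N := fun z => n z t with hNdef
  have hsp : ∀ z, δ < z → HasDerivAt (fun z => n z t + barrier B δ α (t - t₀) z)
      (deriv N z + barrierSlope B δ α (t - t₀) z) z := fun z hz =>
    (h.diff_x t htp htT z (hδ.trans hz)).hasDerivAt.add (hasDerivAt_barrier hz)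
  have hsp2 : ∀ z, δ < z → HasDerivAt (fun z => deriv N z + barrierSlope B δ α (t - t₀) z)
      (deriv (deriv N) z + (5 / 2 - 2 * B / (z - δ) ^ 3)) z := fun z hz =>
    (h.diff_xx t htp htT z (hδ.trans hz)).hasDerivAt.add (hasDerivAt_barrierSlope hz)
  obtain ⟨y1, y2⟩ := second_deriv_nonneg_of_isLocalMin
    ((eventually_gt_nhds hy).mono hsp) (hsp2 y hy) hminy
  obtain ⟨x1, x2⟩ := second_deriv_nonneg_of_isLocalMin
    ((eventually_gt_nhds hx).mono fun z hz => (hsp z hz).neg) (hsp2 x hx).neg hmaxx.neg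
  have hZt := ((h.hasDerivAt_time hy0 htp htT).add
      (hasDerivAt_barrier_time (B := B) (δ := δ) (α := α) (z := y) ht)).sub
    ((h.hasDerivAt_time hx0 htp htT).add
      (hasDerivAt_barrier_time (B := B) (δ := δ) (α := α) (z := x) ht))
  have hle := by
    have hw := hasDerivWithinAt_iff_tendsto_slope' (by simp : t ∉ Iio t) |>.1
      (hZt.hasDerivWithinAt (s := Iio t))
    refine le_of_tendsto (b := (0 : ℝ)) hw ?_
    filter_upwards [hmint, self_mem_nhdsWithin] with s hs hst
    rw [slope_def_field]
    refine div_nonpos_of_nonneg_of_nonpos ?_ (sub_nonpos.2 (le_of_lt hst))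
    simp only [Pi.sub_apply, Pi.add_apply]
    linarith
  set V := n x t + barrier B δ α (t - t₀) x with hV
  have hny := h.nonneg y t hy0 htp htT
  have hF := forcing_mono (V := V) hT hδ hα hαM hτ (by linarith) hB hx hxy.le
    (by rw [hV]; linarith) (by linarith)
  have hsy : y ≤ barrierSlope B δ α (t - t₀) y := by
    unfold barrierSlope
    have : 0 ≤ 1 / (2 * (t - t₀)) + α / 2 + B / (y - δ) ^ 2 := by positivity
    linarith
  unfold forcing at hF
  have ex : V - barrier B δ α (t - t₀) x = n x t := by rw [hV]; ring
  obtain ⟨d, hd⟩ : ∃ d, V - barrier B δ α (t - t₀) y = n y t + d :=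
    ⟨_, (add_sub_cancel _ _).symm⟩
  have hd0 : 0 < d := by linarith
  rw [ex, hd] at hF
  have x1' : deriv N x = - barrierSlope B δ α (t - t₀) x := by linarith
  have y1' : deriv N y = - barrierSlope B δ α (t - t₀) y := by linarith
  rw [x1', y1'] at hle
  have hy2 := mul_nonneg (sq_nonneg y) y2
  have hx2 := mul_nonneg (sq_nonneg x) x2
  have hgain : 0 < d * (2 * barrierSlope B δ α (t - t₀) y - (2 * y - 2)) :=
    mul_pos hd0 (by linarith)
  linarith

/-! ### Almost-monotonicity on compact regions -/

lemma bound_closed {n : ℝ → ℝ → ℝ} {n₀ : ℝ → ℝ} {T : ℝ} (h : IsKompSolOn n n₀ T) {M : ℝ}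
    (hM : ∀ x t : ℝ, 0 < x → 0 < t → t < T → n x t ≤ M) {x t : ℝ} (hx : 0 < x) (ht : 0 < t)
    (htT : t ≤ T) : n x t ≤ M := by
  have hc : ContinuousAt (fun τ => n x τ) t := (h.diff_t x hx t ht htT).continuousAt
  have hc' : Tendsto (fun τ => n x τ) (𝓝[<] t) (𝓝 (n x t)) := hc.tendsto.mono_left inf_le_left
  refine le_of_tendsto hc' ?_
  filter_upwards [self_mem_nhdsWithin, Ioo_mem_nhdsLT ht] with s hs hs'
  exact hM x s hx hs'.1 (lt_of_lt_of_le hs htT)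

/-- Almost-monotonicity of `n + Φ` for the modified barrier. -/
lemma two_point_bound {n : ℝ → ℝ → ℝ} {n₀ : ℝ → ℝ} {T : ℝ} (h : IsKompSolOn n n₀ T)
    {M : ℝ} (hM : ∀ x t : ℝ, 0 < x → 0 < t → t ≤ T → n x t ≤ M)
    {δ α B t₀ t x y ε : ℝ} (hδ : 0 < δ) (hα : 0 ≤ α) (hαM : 6 * M ≤ α ^ 2 + 2 * α)
    (hB : B = (3 + 4 * T) * δ ^ 2) (ht₀ : 0 < t₀) (ht : t₀ < t) (htT : t ≤ T) (hε : 0 < ε)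
    (hx : δ < x) (hxy : x ≤ y) :
    -ε ≤ n y t + barrier B δ α (t - t₀) y - (n x t + barrier B δ α (t - t₀) x) := by
  have hT : 0 < T := (ht₀.trans ht).trans_le htT
  have hB0 : 0 < B := by rw [hB]; positivity
  have hM0 : 0 ≤ M := (h.nonneg 1 T one_pos hT le_rfl).trans (hM 1 T one_pos hT le_rfl)
  obtain ⟨R₁, hR₁, hdec⟩ := h.decay ε hε
  obtain ⟨R, hR⟩ : ∃ R, R₁ + 1 ≤ R ∧ 2 ≤ R ∧ M ≤ R ∧ y < R :=
    ⟨max (max (R₁ + 1) 2) (max M (y + 1)), by simp, by simp, by simp,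
      lt_of_lt_of_le (lt_add_one y) (by simp)⟩
  obtain ⟨hR1, hR2, hR3, hyR⟩ := hR
  -- `c` is a modulus of uniform continuity of `n` for `ε` on `[δ, R] × [t₀, T]`.
  obtain ⟨c, hc, huc⟩ : ∃ c > 0, ∀ a b s, δ ≤ a → a ≤ b → b ≤ R → t₀ ≤ s → s ≤ T → b - a < c →
      -ε ≤ n b s - n a s := by
    have hcomp : IsCompact (Icc δ R ×ˢ Icc t₀ T) := isCompact_Icc.prod isCompact_Icc
    have huc := hcomp.uniformContinuousOn_of_continuous (h.contOn.mono (by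
      rintro ⟨a, s⟩ ⟨ha, hs⟩
      exact ⟨lt_of_lt_of_le hδ ha.1, lt_of_lt_of_le ht₀ hs.1, hs.2⟩))
    obtain ⟨c, hc, H⟩ := Metric.uniformContinuousOn_iff.1 huc ε hε
    refine ⟨c, hc, fun a b s ha hab hb hs hsT hlt => ?_⟩
    have := H (b, s) ⟨⟨ha.trans hab, hb⟩, hs, hsT⟩ (a, s) ⟨⟨ha, hab.trans hb⟩, hs, hsT⟩ (by
      rw [Prod.dist_eq, dist_self, Real.dist_eq, abs_of_nonneg (sub_nonneg.2 hab)]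
      exact max_lt hlt hc)
    rw [Real.dist_eq] at this
    exact (abs_lt.1 this).1.le
  by_contra! hcon
  -- For `a - δ ≤ ρ` and `b - a ≥ c` the singular part of the barrier gains at least `M`.
  obtain ⟨ρ, hρ, hρx, hρM⟩ : ∃ ρ, 0 < ρ ∧ ρ < x - δ ∧ M ≤ B / ρ - B / c := by
    have hpos : 0 < M + B / c := by positivity
    refine ⟨min (B / (M + B / c)) ((x - δ) / 2), lt_min (by positivity) (by linarith),
      lt_of_le_of_lt (min_le_right _ _) (by linarith), ?_⟩
    have hm : 0 < min (B / (M + B / c)) ((x - δ) / 2) := lt_min (by positivity) (by linarith)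
    have : M + B / c ≤ B / min (B / (M + B / c)) ((x - δ) / 2) := by
      rw [le_div_iff₀ hm]
      calc _ ≤ (M + B / c) * (B / (M + B / c)) :=
            mul_le_mul_of_nonneg_left (min_le_left _ _) hpos.le
        _ = B := by field_simp
    linarith
  -- For `s - t₀ ≤ σ` and `b - a ≥ c` the term with `1/(2τ)` gains at least `M`.
  obtain ⟨σ, hσ, hσt, hσM⟩ : ∃ σ, 0 < σ ∧ σ < t - t₀ ∧ M * (2 * σ) ≤ c := by
    refine ⟨min (c / (2 * (M + 1))) ((t - t₀) / 2), lt_min (by positivity) (by linarith),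
      lt_of_le_of_lt (min_le_right _ _) (by linarith), ?_⟩
    calc M * (2 * min (c / (2 * (M + 1))) ((t - t₀) / 2))
        ≤ (M + 1) * (2 * (c / (2 * (M + 1)))) := by
          gcongr
          · linarith
          · exact min_le_left _ _
      _ = c := by field_simp
  set W : ℝ × ℝ × ℝ → ℝ := fun p => n p.2.1 p.2.2 + barrier B δ α (p.2.2 - t₀) p.2.1
    - (n p.1 p.2.2 + barrier B δ α (p.2.2 - t₀) p.1) with hW
  set K : Set (ℝ × ℝ × ℝ) := (Icc (δ + ρ) R ×ˢ Icc (δ + ρ) R ×ˢ Icc (t₀ + σ) t) ∩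
    {p | p.1 ≤ p.2.1} with hK
  have hKc : IsCompact K := (isCompact_Icc.prod (isCompact_Icc.prod isCompact_Icc)).inter_right
    (isClosed_le continuous_fst (continuous_fst.comp continuous_snd))
  have hWc : ContinuousOn W K := by
    have hn : ∀ g : ℝ × ℝ × ℝ → ℝ, Continuous g → (∀ p ∈ K, δ < g p) →
        ContinuousOn (fun p => n (g p) p.2.2 + barrier B δ α (p.2.2 - t₀) (g p)) K := by
      intro g hg hgK
      have hmem : ∀ p ∈ K, t₀ < p.2.2 ∧ p.2.2 ≤ T := fun p hp =>
        ⟨by linarith [hp.1.2.2.1], hp.1.2.2.2.trans htT⟩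
      refine ContinuousOn.add ?_ ?_
      · exact h.contOn.comp (f := fun p : ℝ × ℝ × ℝ => (g p, p.2.2))
          (hg.prodMk (continuous_snd.comp continuous_snd)).continuousOn
          (fun p hp => ⟨hδ.trans (hgK p hp), ht₀.trans (hmem p hp).1, (hmem p hp).2⟩)
      · unfold barrier
        have h1 : ContinuousOn g K := hg.continuousOn
        have h2 : ContinuousOn (fun p : ℝ × ℝ × ℝ => p.2.2) K :=
          (continuous_snd.comp continuous_snd).continuousOn
        refine ContinuousOn.sub (ContinuousOn.add (ContinuousOn.add ?_ (by fun_prop))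
          (by fun_prop)) ?_
        · refine h1.div (by fun_prop) fun p hp => ?_
          have := (hmem p hp).1
          exact mul_ne_zero two_ne_zero (sub_pos.2 this).ne'
        · exact continuousOn_const.div (by fun_prop) fun p hp => (sub_pos.2 (hgK p hp)).ne'
    exact (hn (fun p => p.2.1) (continuous_fst.comp continuous_snd)
      (fun p hp => by linarith [hp.1.2.1.1])).sub
      (hn (fun p => p.1) continuous_fst (fun p hp => by linarith [hp.1.1.1]))
  have hmemK : (x, y, t) ∈ K :=
    ⟨⟨⟨by simp; linarith, by simp; linarith⟩, ⟨by simp; linarith, hyR.le⟩,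
      ⟨by simp; linarith, le_rfl⟩⟩, hxy⟩
  obtain ⟨⟨a, b, s⟩, hpK, hmin⟩ := hKc.exists_isMinOn ⟨_, hmemK⟩ hWc
  have hWneg : W (a, b, s) < -ε := lt_of_le_of_lt (hmin hmemK) hcon
  obtain ⟨⟨⟨ha1, ha2⟩, ⟨hb1, hb2⟩, hs1, hs2⟩, hab⟩ := hpK
  simp only [mem_ofPred_eq] at ha1 ha2 hb1 hb2 hs1 hs2 hab
  have hWv : W (a, b, s) = n b s - n a s + ((b - a) / (2 * (s - t₀)) + 5 * (b ^ 2 - a ^ 2) / 4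
      + α * (b - a) / 2 + (B / (a - δ) - B / (b - δ))) := by
    simp only [hW, barrier]
    ring
  have hτ : 0 < s - t₀ := by linarith
  have hs0 : 0 < s := by linarith
  have hsT : s ≤ T := hs2.trans htT
  have haδ : 0 < a - δ := by linarith
  have ha0 : 0 < a := by linarith
  have hb0 : 0 < b := by linarith
  have g1 : 0 ≤ (b - a) / (2 * (s - t₀)) := div_nonneg (sub_nonneg.2 hab) (by positivity)
  have g2 : 0 ≤ 5 * (b ^ 2 - a ^ 2) / 4 := by
    have := pow_le_pow_left₀ ha0.le hab 2
    linarith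
  have g3 : 0 ≤ α * (b - a) / 2 := by
    have := mul_nonneg hα (sub_nonneg.2 hab)
    linarith
  have g4 : 0 ≤ B / (a - δ) - B / (b - δ) :=
    sub_nonneg.2 (div_le_div_of_nonneg_left hB0.le haδ (by linarith))
  have hnb := h.nonneg b s hb0 hs0 hsT
  have hna := hM a s ha0 hs0 hsT
  have hsep : c ≤ b - a := by
    by_contra! hlt
    have := huc a b s (by linarith) hab hb2 (by linarith) hsT hlt
    linarith
  have ha3 : δ + ρ < a := by
    refine lt_of_le_of_ne ha1 fun he => ?_
    have e : a - δ = ρ := by linarith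
    have : B / (b - δ) ≤ B / c := div_le_div_of_nonneg_left hB0.le hc (by linarith)
    rw [e] at g4 hWv
    linarith
  have hb3 : b < R := by
    refine lt_of_le_of_ne hb2 fun he => ?_
    rcases le_total (R - 1) a with hc1 | hc1
    · have h1 := hdec a (by linarith) s hs0.le hsT
      have h2 := h.nonneg a s ha0 hs0 hsT
      have : n a s ≤ a ^ 2 * n a s :=
        le_mul_of_one_le_left h2 (one_le_pow₀ (by linarith))
      linarith
    · have : R ≤ 5 * (b ^ 2 - a ^ 2) / 4 := by
        have := pow_le_pow_left₀ ha0.le hc1 2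
        rw [he]
        linarith
      linarith
  have hs3 : t₀ + σ < s := by
    refine lt_of_le_of_ne hs1 fun he => ?_
    have : M ≤ (b - a) / (2 * (s - t₀)) := by
      rw [le_div_iff₀ (by positivity), ← he]
      calc M * (2 * (t₀ + σ - t₀)) = M * (2 * σ) := by ring
        _ ≤ b - a := by linarith
    linarith
  have hab' : a < b := by linarith
  have hminv : ∀ a' b' s', δ + ρ ≤ a' → a' ≤ b' → b' ≤ R → t₀ + σ ≤ s' → s' ≤ t →
      W (a, b, s) ≤ W (a', b', s') := fun a' b' s' h1 h2 h3 h4 h5 =>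
    hmin (a := (a', b', s')) ⟨⟨⟨h1, h2.trans h3⟩, ⟨h1.trans h2, h3⟩, h4, h5⟩, h2⟩
  refine no_interior_min h hδ hα hαM hB ht₀ (t := s) (by linarith) hsT hna
    (by linarith : δ < a) hab' (lt_trans hWneg (by linarith)) ?_ ?_ ?_
  · filter_upwards [Ioo_mem_nhds hab' hb3] with z hz
    have := hminv a z s ha1 hz.1.le hz.2.le hs1 hs2
    simp only [hW] at this
    linarith
  · filter_upwards [Ioo_mem_nhds ha3 hab'] with z hz
    have := hminv z b s hz.1.le hz.2.le hb2 hs1 hs2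
    simp only [hW] at this
    linarith
  · filter_upwards [Ioo_mem_nhdsLT hs3] with z hz
    exact hminv a b z ha1 hab hb2 hz.1.le (hz.2.le.trans hs2)

/-! ### The slope bound -/

theorem oleinik_inequality
    (T : ℝ) (hT : 0 < T) (n : ℝ → ℝ → ℝ) (n₀ : ℝ → ℝ)
    (hsol : IsKompSolOn n n₀ T)
    (h0nonneg : ∀ x : ℝ, 0 < x → 0 ≤ n₀ x)
    (h0bdd : ∃ C : ℝ, ∀ x : ℝ, 0 < x → n₀ x ≤ C)
    (h0decay : Filter.Tendsto (fun x => x ^ 2 * n₀ x) Filter.atTop (nhds 0))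
    (M : ℝ) (hM : ∀ x t : ℝ, 0 < x → 0 < t → t < T → n x t ≤ M) :
    ∀ x : ℝ, 0 < x → ∀ t : ℝ, 0 < t → t ≤ T →
      ∀ α : ℝ, Real.sqrt (6 * M + 1) - 1 ≤ α →
        -(1 / (2 * t)) - 5 * x / 2 - α / 2 ≤ deriv (fun y => n y t) x := by
  intro x hx t ht htT α hα
  have hM' : ∀ x t : ℝ, 0 < x → 0 < t → t ≤ T → n x t ≤ M :=
    fun x t hx ht htT => bound_closed hsol hM hx ht htT
  have hM0 : 0 ≤ M :=
    (hsol.nonneg 1 T one_pos hT le_rfl).trans (hM' 1 T one_pos hT le_rfl)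
  have hα0 : 0 ≤ α := by
    have : 1 ≤ Real.sqrt (6 * M + 1) := Real.one_le_sqrt.2 (by linarith)
    linarith
  have hαM : 6 * M ≤ α ^ 2 + 2 * α := by
    have := (Real.sqrt_le_left (by linarith : 0 ≤ α + 1)).1 (by linarith : _ ≤ α + 1)
    nlinarith
  -- Set `t₀ = δ = ε = r` and let `r → 0`.
  have hmono : ∀ y, x ≤ y → n x t + barrier 0 0 α t x ≤ n y t + barrier 0 0 α t y := by
    intro y hxy
    have hy : 0 < y := hx.trans_le hxy
    have hlim : ∀ z, 0 < z → Tendsto (fun r : ℝ => barrier ((3 + 4 * T) * r ^ 2) r α (t - r) z)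
        (𝓝[>] 0) (𝓝 (barrier 0 0 α t z)) := by
      intro z hz
      have hc : ContinuousAt
          (fun r : ℝ => barrier ((3 + 4 * T) * r ^ 2) r α (t - r) z) 0 := by
        unfold barrier
        have h1 : (2 : ℝ) * (t - 0) ≠ 0 := by simpa using ht.ne'
        have h2 : z - 0 ≠ 0 := by simpa using hz.ne'
        fun_prop (disch := assumption)
      have := hc.tendsto
      simp only [ne_eq, OfNat.ofNat_ne_zero, not_false_eq_true, zero_pow, mul_zero,
        sub_zero] at this
      exact this.mono_left inf_le_left
    have hlim0 : Tendsto (fun r : ℝ => -r) (𝓝[>] 0) (𝓝 0) := by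
      have : Tendsto (fun r : ℝ => -r) (𝓝 0) (𝓝 (-0)) := continuous_neg.tendsto 0
      rw [neg_zero] at this
      exact this.mono_left inf_le_left
    have := le_of_tendsto_of_tendsto hlim0
      (((hlim y hy).const_add (n y t)).sub ((hlim x hx).const_add (n x t))) (by
        filter_upwards [Ioo_mem_nhdsGT hx, Ioo_mem_nhdsGT ht] with r hr hr'
        exact two_point_bound hsol hM' hr.1 hα0 hαM rfl hr'.1 hr'.2 htT hr.1 hr.2 hxy)
    linarith
  have hd := (hsol.diff_x t ht htT x hx).hasDerivAt.add
    (hasDerivAt_barrier (B := 0) (α := α) (τ := t) hx)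
  have hnn : 0 ≤ deriv (fun y => n y t) x + barrierSlope 0 0 α t x := by
    have hw := hasDerivWithinAt_iff_tendsto_slope' (by simp : x ∉ Ioi x) |>.1
      (hd.hasDerivWithinAt (s := Ioi x))
    refine ge_of_tendsto hw ?_
    filter_upwards [self_mem_nhdsWithin] with y hy
    rw [slope_def_field]
    have := hmono y (le_of_lt hy)
    refine div_nonneg ?_ (sub_nonneg.2 (le_of_lt hy))
    simp only [Pi.add_apply]
    linarith
  unfold barrierSlope at hnn
  simp only [zero_div, add_zero] at hnn
  linarith
end

section
/- Let T > 0, Q_T = (0,∞)×(0,T), and let n ∈ L∞(Q_T) be a nonnegative solution of the Kompaneets equation on Q_T with initial data n₀ satisfying x² n₀(x) → 0 as x → ∞. Then for every t ∈ (0,T], the limit lim_{x→0⁺} n(x,t) exists (so the solution extends continuously to the zero-energy boundary at each positive time). -/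
/-!
The solution satisfies a one-sided (Oleinik type) bound: at every positive time `t` there are `φ`
and `ρ > 0` such that `n(x,t) - n(y,t) ≤ φ (y - x)` for `0 < x < y ≤ ρ`. Hence
`x ↦ n(x,t) + φ x` is nondecreasing near `0` and bounded below by `0`, so it has a limit
at `0⁺`, and so does `n(·,t)`.

The bound comes from the convection term `∂ₓ(n²)`, which forces negative slopes to relax like
`-1/(2t)`. Differentiating the equation would need third derivatives, so the maximum principle is
applied instead to the two-point function
`Ψ(x,y,t) = τ (n(x,t) - n(y,t) - δ (log (ρ/x) + τ)) - (A τ + 1/2) (y - x)`, `τ = t - t₀`,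
on `c ≤ x ≤ y ≤ ρ`, `t₀ ≤ t ≤ t₁`. The logarithmic penalty replaces the missing boundary condition
at `x = 0`: it costs only `x² ∂ₓ² log x = -1` in the diffusion, compensated by its `τ` term. The
decay of `x² ∂ₓ n` at infinity handles the side `y = ρ`. At a positive maximum both second
derivatives in `x` and `y` have the favourable sign, and the equation gives
`∂ₜ Ψ ≤ -A (y - x) < 0`, a contradiction (`interior_max_false`). So `Ψ ≤ 0`
(`two_point_penalized`); letting `δ → 0` gives the bound (`oleinik_bound`).
-/

open MeasureTheory Filter Set Real Topology

/-- A maximum over earlier times has nonnegative time derivative. -/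
lemma deriv_nonneg_of_left_max {f : ℝ → ℝ} {f' a t : ℝ} (hat : a < t)
    (hf : HasDerivAt f f' t) (hmax : ∀ s, a ≤ s → s ≤ t → f s ≤ f t) : 0 ≤ f' := by
  have h1 := (hasDerivAt_iff_tendsto_slope_left_right.mp hf).1
  refine ge_of_tendsto h1 ?_
  filter_upwards [Ioo_mem_nhdsLT hat] with s hs
  rw [slope_def_field]
  exact div_nonneg_of_nonpos (by linarith [hmax s hs.1.le hs.2.le]) (by linarith [hs.2])

lemma second_deriv_nonpos_of_isLocalMax {f g : ℝ → ℝ} {x g' : ℝ}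
    (hf : ∀ᶠ z in 𝓝 x, HasDerivAt f (g z) z) (hg : HasDerivAt g g' x)
    (hmax : IsLocalMax f x) : g' ≤ 0 := by
  by_contra! hpos
  have hd : deriv f =ᶠ[𝓝 x] g := hf.mono fun z hz => hz.deriv
  have hdd : deriv (deriv f) x = g' := hd.deriv_eq.trans hg.deriv
  have hmin : IsLocalMin f x :=
    isLocalMin_of_deriv_deriv_pos (by rw [hdd]; exact hpos) hmax.deriv_eq_zero
      hf.self_of_nhds.continuousAt
  have hconst : f =ᶠ[𝓝 x] fun _ => f x := by
    filter_upwards [hmax, hmin] with z h1 h2 using le_antisymm h1 h2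
  have h0 : deriv f =ᶠ[𝓝 x] fun _ => 0 := by
    simpa using hconst.deriv
  have : deriv (deriv f) x = 0 := by rw [h0.deriv_eq]; simp
  linarith

/-- The equation in nondivergence form. -/
lemma IsKompSolOn.deriv_t_eq {n : ℝ → ℝ → ℝ} {n₀ : ℝ → ℝ} {T : ℝ} (h : IsKompSolOn n n₀ T)
    {x t : ℝ} (hx : 0 < x) (ht : 0 < t) (htT : t ≤ T) :
    deriv (fun τ => n x τ) t =
      x ^ 2 * deriv (deriv (fun y => n y t)) x
        + (x ^ 2 + 2 * n x t) * deriv (fun y => n y t) x + (2 * x - 2) * n x t := by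
  rw [h.pde x hx t ht htT]
  have h1 := (h.diff_x t ht htT x hx).hasDerivAt
  have h2 := (h.diff_xx t ht htT x hx).hasDerivAt
  have hid := hasDerivAt_id x
  have h3 := (((hid.pow 2).mul h2).add (((hid.pow 2).sub (hid.const_mul 2)).mul h1)).add (h1.pow 2)
  have h4 : HasDerivAt (fun y => kompFlux (fun z => n z t) y) _ x := h3
  rw [h4.deriv]
  simp
  ring

/-- At an interior critical point of the two-point function with `Ψ > 0`, where the second
derivatives satisfy the necessary conditions for a maximum, the equation contradicts
`∂ₜ Ψ ≥ 0`. Here `p, q` are the values of `n` at `x, y`, `p1, p2, q1, q2` its space derivatives,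
`l` stands for `log (ρ/x)` and
`τ = t - t₀`. -/
lemma interior_max_false {x y τ A ρ δ p q p1 p2 q1 q2 l : ℝ}
    (hx : 0 < x) (hxy : x < y) (hy : y ≤ ρ) (hτ : 0 < τ) (hA : 2 * ρ ≤ A) (hδ : 0 < δ)
    (hp : 0 ≤ p) (hq : 0 ≤ q) (hl : 0 ≤ l)
    (hpos : 0 < τ * (p - q - δ * (l + τ)) - (A * τ + 1 / 2) * (y - x))
    (ex : τ * (p1 + δ / x) + (A * τ + 1 / 2) = 0) (ey : -(τ * q1) - (A * τ + 1 / 2) = 0)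
    (exx : p2 - δ / x ^ 2 ≤ 0) (eyy : 0 ≤ q2)
    (et : 0 ≤ (p - q - δ * (l + τ)) + τ * ((x ^ 2 * p2 + (x ^ 2 + 2 * p) * p1 + (2 * x - 2) * p)
      - (y ^ 2 * q2 + (y ^ 2 + 2 * q) * q1 + (2 * y - 2) * q) - δ) - A * (y - x)) : False := by
  have hρ : 0 < ρ := by linarith
  have hA0 : 0 < A := by linarith
  -- `φ` is the slope at the maximum
  obtain ⟨φ, hφ⟩ : ∃ φ, τ * φ = A * τ + 1 / 2 := ⟨(A * τ + 1 / 2) / τ, by field_simp⟩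
  have hφA : A ≤ φ := by
    by_contra! hc
    nlinarith [mul_lt_mul_of_pos_left hc hτ]
  have hq1 : q1 = -φ := mul_left_cancel₀ hτ.ne' (by linarith)
  have hp1 : p1 = -φ - δ / x := mul_left_cancel₀ hτ.ne' (by linarith)
  have hdx : 0 < δ / x := by positivity
  have hN : φ * (y - x) < p - q := by
    have h1 : 0 < τ * (p - q - δ * (l + τ) - φ * (y - x)) := by
      rw [← hφ] at hpos; linarith
    have h2 := pos_of_mul_pos_right h1 hτ.le
    have : 0 ≤ δ * (l + τ) := by positivity
    linarith
  have hxx : x ^ 2 * p2 ≤ δ := by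
    have h1 : x ^ 2 * (p2 - δ / x ^ 2) ≤ 0 := mul_nonpos_of_nonneg_of_nonpos (by positivity) exx
    have h2 : x ^ 2 * (δ / x ^ 2) = δ := by field_simp
    linarith
  have hyy : 0 ≤ y ^ 2 * q2 := by positivity
  have hconv : (x ^ 2 + 2 * p) * p1 ≤ -(φ * (x ^ 2 + 2 * p)) := by
    rw [hp1]
    have : 0 ≤ (x ^ 2 + 2 * p) * (δ / x) := by positivity
    linarith
  have hd : 0 < y - x := by linarith
  have hN0 : 0 < p - q := lt_trans (by have : 0 < φ := by linarith
                                       positivity) hN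
  have hrhs : (x ^ 2 * p2 + (x ^ 2 + 2 * p) * p1 + (2 * x - 2) * p)
      - (y ^ 2 * q2 + (y ^ 2 + 2 * q) * q1 + (2 * y - 2) * q) - δ
      ≤ 2 * ρ * φ * (y - x) - (2 * φ - 2 * ρ) * (p - q) := by
    rw [hq1]
    have e1 : 0 ≤ q * (y - x) := by positivity
    have e2 : 0 ≤ (ρ - x) * (p - q) := mul_nonneg (by linarith) hN0.le
    have e3 : 0 ≤ (2 * ρ - (x + y)) * (φ * (y - x)) :=
      mul_nonneg (by linarith) (mul_nonneg (by linarith) hd.le)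
    nlinarith
  have h1 := mul_le_mul_of_nonneg_left hrhs hτ.le
  have e4 : 0 ≤ δ * (l + τ) := by positivity
  have e5 : 0 < τ * (A * (p - q - φ * (y - x))) :=
    mul_pos hτ (mul_pos hA0 (by linarith))
  have e6 : 0 ≤ τ * ((A - 2 * ρ) * (p - q)) :=
    mul_nonneg hτ.le (mul_nonneg (by linarith) hN0.le)
  have e7 : 0 ≤ (τ * φ) * ((A - 2 * ρ) * (y - x)) :=
    mul_nonneg (by rw [hφ]; positivity) (mul_nonneg (by linarith) hd.le)
  have e8 : 0 < A * (y - x) := by positivity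
  have e9 : τ * φ * (p - q) = (A * τ + 1 / 2) * (p - q) := by rw [hφ]
  nlinarith

/-- `Ψ ≤ 0`: the maximum principle for the penalized two-point function. The hypothesis `hside`
controls the side `y = ρ`. -/
lemma two_point_penalized {n : ℝ → ℝ → ℝ} {n₀ : ℝ → ℝ} {T : ℝ} (h : IsKompSolOn n n₀ T)
    {M A ρ δ t0 t1 : ℝ} (ht0 : 0 < t0) (ht01 : t0 < t1) (ht1 : t1 ≤ T)
    (hM : ∀ x t, 0 < x → 0 < t → t ≤ T → n x t ≤ M)
    (hA : 2 * ρ ≤ A) (hδ : 0 < δ)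
    (hside : ∀ x t, 0 < x → x ≤ ρ → t0 ≤ t → t ≤ t1 → n x t - n ρ t ≤ A * (ρ - x))
    {x y : ℝ} (hx : 0 < x) (hxy : x ≤ y) (hy : y ≤ ρ) :
    (t1 - t0) * (n x t1 - n y t1 - δ * (log ρ - log x + (t1 - t0)))
      - (A * (t1 - t0) + 1 / 2) * (y - x) ≤ 0 := by
  have hρ : 0 < ρ := by linarith
  -- at `x = c` the penalty dominates the bound `M`
  obtain ⟨c, hc0, hcx, hc⟩ : ∃ c, 0 < c ∧ c ≤ x ∧ M ≤ δ * (log ρ - log c) := by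
    refine ⟨min x (ρ * exp (-(M / δ))), by positivity, min_le_left _ _, ?_⟩
    have h1 : log (min x (ρ * exp (-(M / δ)))) ≤ log (ρ * exp (-(M / δ))) :=
      log_le_log (by positivity) (min_le_right _ _)
    rw [log_mul hρ.ne' (exp_pos _).ne', log_exp] at h1
    have h2 : M = δ * (M / δ) := by field_simp
    nlinarith
  let Ψ : ℝ × ℝ × ℝ → ℝ := fun z =>
    (z.2.2 - t0) * (n z.1 z.2.2 - n z.2.1 z.2.2 - δ * (log ρ - log z.1 + (z.2.2 - t0)))
      - (A * (z.2.2 - t0) + 1 / 2) * (z.2.1 - z.1)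
  let K : Set (ℝ × ℝ × ℝ) := (Icc c ρ ×ˢ (Icc c ρ ×ˢ Icc t0 t1)) ∩ {z | z.1 ≤ z.2.1}
  have hK : IsCompact K :=
    (isCompact_Icc.prod (isCompact_Icc.prod isCompact_Icc)).inter_right
      (isClosed_le (by fun_prop) (by fun_prop))
  have hcont : ContinuousOn Ψ K := by
    have c1 : ContinuousOn (fun z : ℝ × ℝ × ℝ => n z.1 z.2.2) K :=
      h.contOn.comp (f := fun z : ℝ × ℝ × ℝ => (z.1, z.2.2)) (by fun_prop)
        (fun z hz => ⟨lt_of_lt_of_le hc0 hz.1.1.1,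
          lt_of_lt_of_le ht0 hz.1.2.2.1, hz.1.2.2.2.trans ht1⟩)
    have c2 : ContinuousOn (fun z : ℝ × ℝ × ℝ => n z.2.1 z.2.2) K :=
      h.contOn.comp (f := fun z : ℝ × ℝ × ℝ => (z.2.1, z.2.2)) (by fun_prop)
        (fun z hz => ⟨lt_of_lt_of_le hc0 hz.1.2.1.1,
          lt_of_lt_of_le ht0 hz.1.2.2.1, hz.1.2.2.2.trans ht1⟩)
    have c3 : ContinuousOn (fun z : ℝ × ℝ × ℝ => log z.1) K :=
      ContinuousOn.log (by fun_prop) (fun z hz => (lt_of_lt_of_le hc0 hz.1.1.1).ne')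
    exact ((by fun_prop : ContinuousOn (fun z : ℝ × ℝ × ℝ => z.2.2 - t0) K).mul
      ((c1.sub c2).sub (((continuousOn_const.sub c3).add (by fun_prop)).const_mul δ))).sub
      (by fun_prop)
  have hmem : (x, y, t1) ∈ K :=
    ⟨⟨⟨hcx, hxy.trans hy⟩, ⟨hcx.trans hxy, hy⟩, ht01.le, le_rfl⟩, hxy⟩
  obtain ⟨⟨a, b, t⟩, hzK, hzmax⟩ := hK.exists_isMaxOn ⟨_, hmem⟩ hcont
  change Ψ (x, y, t1) ≤ 0
  refine le_trans (hzmax hmem) ?_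
  by_contra! hpos
  have hΨ : ∀ a' b' t', c ≤ a' → a' ≤ b' → b' ≤ ρ → t0 ≤ t' → t' ≤ t1 →
      Ψ (a', b', t') ≤ Ψ (a, b, t) := fun a' b' t' h1 h2 h3 h4 h5 =>
    hzmax (show (a', b', t') ∈ K from
      ⟨⟨⟨h1, h2.trans h3⟩, ⟨h1.trans h2, h3⟩, h4, h5⟩, h2⟩)
  obtain ⟨⟨⟨hca, haρ⟩, ⟨hcb, hbρ⟩, htl, htr⟩, hab⟩ := hzK
  simp only [mem_ofPred_eq] at hca haρ hcb hbρ htl htr hab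
  have ha : 0 < a := lt_of_lt_of_le hc0 hca
  have hb : 0 < b := lt_of_lt_of_le hc0 hcb
  have ht : 0 < t := lt_of_lt_of_le ht0 htl
  have htT : t ≤ T := htr.trans ht1
  have hposE : 0 < (t - t0) * (n a t - n b t - δ * (log ρ - log a + (t - t0)))
      - (A * (t - t0) + 1 / 2) * (b - a) := hpos
  have hl : 0 ≤ log ρ - log a := by linarith [log_le_log ha haρ]
  have hA0 : 0 < A := by linarith
  have htpos : t0 < t := by
    rcases htl.lt_or_eq with h1 | h1
    · exact h1
    · exfalso
      rw [← h1] at hposE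
      nlinarith
  have hτ : 0 < t - t0 := by linarith
  have hN : A * (b - a) < n a t - n b t - δ * (log ρ - log a + (t - t0)) := by
    have h1 : 0 < (t - t0) *
        (n a t - n b t - δ * (log ρ - log a + (t - t0)) - A * (b - a)) := by nlinarith
    linarith [pos_of_mul_pos_right h1 hτ.le]
  have hP : 0 ≤ δ * (log ρ - log a + (t - t0)) := by positivity
  have hab' : a < b := by
    rcases hab.lt_or_eq with h1 | h1
    · exact h1
    · exfalso
      rw [← h1] at hN
      linarith
  have hca' : c < a := by
    rcases hca.lt_or_eq with h1 | h1
    · exact h1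
    · exfalso
      rw [← h1] at hN
      have := hM c t hc0 ht htT
      have := h.nonneg b t hb ht htT
      have : 0 ≤ A * (b - c) := mul_nonneg hA0.le (by linarith)
      have : 0 ≤ δ * (t - t0) := by positivity
      linarith
  have hbρ' : b < ρ := by
    rcases hbρ.lt_or_eq with h1 | h1
    · exact h1
    · exfalso
      rw [h1] at hN
      linarith [hside a t ha haρ htl htr]
  -- first and second order conditions in `x`
  have hmaxx : IsLocalMax (fun z => Ψ (z, b, t)) a := by
    filter_upwards [Ioo_mem_nhds hca' hab'] with z hz using
      hΨ z b t hz.1.le hz.2.le hbρ htl htr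
  have hdx : ∀ z, 0 < z → HasDerivAt (fun z => Ψ (z, b, t))
      ((t - t0) * (deriv (fun y => n y t) z + δ / z) + (A * (t - t0) + 1 / 2)) z := by
    intro z hz
    have h1 := (h.diff_x t ht htT z hz).hasDerivAt
    have h2 := hasDerivAt_log hz.ne'
    have h3 := (((h1.sub_const (n b t)).sub
      (((h2.const_sub (log ρ)).add_const (t - t0)).const_mul δ)).const_mul (t - t0)).sub
      (((hasDerivAt_id z).const_sub b).const_mul (A * (t - t0) + 1 / 2))
    refine HasDerivAt.congr_deriv (f' := _) h3 ?_
    rw [div_eq_mul_inv]; ring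
  have ex := hmaxx.hasDerivAt_eq_zero (hdx a ha)
  have exx : deriv (deriv (fun y => n y t)) a - δ / a ^ 2 ≤ 0 := by
    have h1 := (h.diff_xx t ht htT a ha).hasDerivAt
    have h2 := (hasDerivAt_inv ha.ne').const_mul δ
    have h3 := ((h1.add h2).const_mul (t - t0)).add_const (A * (t - t0) + 1 / 2)
    have h4 := second_deriv_nonpos_of_isLocalMax
      ((lt_mem_nhds ha).mono hdx) h3 hmaxx
    have h5 := nonpos_of_mul_nonpos_right h4 hτ
    rw [div_eq_mul_inv]; linarith
  -- first and second order conditions in `y`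
  have hmaxy : IsLocalMax (fun z => Ψ (a, z, t)) b := by
    filter_upwards [Ioo_mem_nhds hab' hbρ'] with z hz using
      hΨ a z t hca hz.1.le hz.2.le htl htr
  have hdy : ∀ z, 0 < z → HasDerivAt (fun z => Ψ (a, z, t))
      (-((t - t0) * deriv (fun y => n y t) z) - (A * (t - t0) + 1 / 2)) z := by
    intro z hz
    have h1 := (h.diff_x t ht htT z hz).hasDerivAt
    have h3 := (((h1.const_sub (n a t)).sub_const
      (δ * (log ρ - log a + (t - t0)))).const_mul (t - t0)).sub
      (((hasDerivAt_id z).sub_const a).const_mul (A * (t - t0) + 1 / 2))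
    refine HasDerivAt.congr_deriv (f' := _) h3 ?_
    ring
  have ey := hmaxy.hasDerivAt_eq_zero (hdy b hb)
  have eyy : 0 ≤ deriv (deriv (fun y => n y t)) b := by
    have h1 := (h.diff_xx t ht htT b hb).hasDerivAt
    have h3 := ((h1.const_mul (t - t0)).neg).sub_const (A * (t - t0) + 1 / 2)
    have h4 := second_deriv_nonpos_of_isLocalMax
      ((lt_mem_nhds hb).mono hdy) h3 hmaxy
    exact nonneg_of_mul_nonneg_right (by linarith) hτ
  -- one-sided condition in time
  have hdt : HasDerivAt (fun s => Ψ (a, b, s))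
      ((n a t - n b t - δ * (log ρ - log a + (t - t0))) + (t - t0) *
        (deriv (fun τ => n a τ) t - deriv (fun τ => n b τ) t - δ) - A * (b - a)) t := by
    have h1 := (h.diff_t a ha t ht htT).hasDerivAt
    have h2 := (h.diff_t b hb t ht htT).hasDerivAt
    have hs := (hasDerivAt_id t).sub_const t0
    have h3 := (hs.mul ((h1.sub h2).sub ((hs.const_add (log ρ - log a)).const_mul δ))).sub
      (((hs.const_mul A).add_const (1 / 2)).mul_const (b - a))
    refine HasDerivAt.congr_deriv (f' := _) h3 ?_
    simp
  have et := deriv_nonneg_of_left_max htpos hdt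
    (fun s hs1 hs2 => hΨ a b s hca hab hbρ hs1 (hs2.trans htr))
  rw [h.deriv_t_eq ha ht htT, h.deriv_t_eq hb ht htT] at et
  exact interior_max_false ha hab' hbρ hτ hA hδ (h.nonneg a t ha ht htT)
    (h.nonneg b t hb ht htT) hl hposE ex ey exx eyy et

/-- One-sided Lipschitz bound near `x = 0` at a positive time. -/
lemma oleinik_bound {n : ℝ → ℝ → ℝ} {n₀ : ℝ → ℝ} {T : ℝ} (h : IsKompSolOn n n₀ T)
    {M : ℝ} (hM : ∀ x t, 0 < x → 0 < t → t ≤ T → n x t ≤ M) {t : ℝ} (ht : 0 < t) (htT : t ≤ T) :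
    ∃ φ ρ : ℝ, 0 < ρ ∧ ∀ x y, 0 < x → x ≤ y → y ≤ ρ → n x t - n y t ≤ φ * (y - x) := by
  obtain ⟨R₁, hR₁, hdec⟩ := h.decay' 1 one_pos
  set t0 := t / 2 with ht0def
  have ht0 : 0 < t0 := by positivity
  -- `R ≥ 1 + 1/t₀` puts `[R, ∞) × [t₀, t]` inside the region where the decay of `∂ₓ n` holds
  obtain ⟨R, hRR, hR1⟩ : ∃ R, R₁ ≤ R ∧ 1 + 1 / t0 ≤ R := ⟨max R₁ (1 + 1 / t0), by simp, by simp⟩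
  have hinv : 0 < 1 / t0 := by positivity
  obtain ⟨A, hA1, hA2⟩ : ∃ A, 2 * (R + 1) ≤ A ∧ M ≤ A := ⟨max (2 * (R + 1)) M, by simp, by simp⟩
  have hslope : ∀ x s, R ≤ x → t0 ≤ s → s ≤ t → -1 ≤ deriv (fun y => n y s) x := by
    intro x s hx hs1 hs2
    have hx1 : 1 ≤ x := by linarith
    have hxs : 1 / x ^ 2 ≤ s := by
      have h1 : 1 / t0 ≤ x ^ 2 := by nlinarith
      have h2 : 1 / x ^ 2 ≤ 1 / (1 / t0) := one_div_le_one_div_of_le hinv h1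
      rw [one_div_one_div] at h2
      linarith
    have h1 := (abs_lt.mp (hdec x (hRR.trans hx) s hxs (hs2.trans htT))).1
    by_contra! hc
    nlinarith
  have hside : ∀ x s, 0 < x → x ≤ R + 1 → t0 ≤ s → s ≤ t →
      n x s - n (R + 1) s ≤ A * (R + 1 - x) := by
    intro x s hx hxR hs1 hs2
    have hs : 0 < s := by linarith
    have hsT : s ≤ T := by linarith
    rcases le_or_gt R x with hRx | hRx
    · have hmono := (convex_Icc x (R + 1)).mul_sub_le_image_sub_of_le_deriv
        (f := fun y => n y s) (C := -1)
        (fun z hz => (h.diff_x s hs hsT z (by linarith [hz.1])).continuousAt.continuousWithinAt)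
        (fun z hz => by
          rw [interior_Icc] at hz
          exact (h.diff_x s hs hsT z (by linarith [hz.1])).differentiableWithinAt)
        (fun z hz => by
          rw [interior_Icc] at hz
          exact hslope z s (by linarith [hz.1]) hs1 hs2)
        x (left_mem_Icc.mpr hxR) (R + 1) (right_mem_Icc.mpr hxR) hxR
      have : 0 ≤ (A - 1) * (R + 1 - x) := mul_nonneg (by linarith) (by linarith)
      linarith
    · have h1 := hM x s hx hs hsT
      have h2 := h.nonneg (R + 1) s (by linarith) hs hsT
      nlinarith
  have hτ : 0 < t - t0 := by rw [ht0def]; linarith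
  refine ⟨A + 1 / (2 * (t - t0)), R + 1, by linarith, fun x y hx hxy hy => ?_⟩
  have key : ∀ δ, 0 < δ → n x t - n y t - (A + 1 / (2 * (t - t0))) * (y - x)
      ≤ δ * (log (R + 1) - log x + (t - t0)) := by
    intro δ hδ
    have h1 := two_point_penalized h ht0 (by linarith) htT hM hA1 hδ hside hx hxy hy
    have h2 : (t - t0) * (A + 1 / (2 * (t - t0))) = A * (t - t0) + 1 / 2 := by field_simp
    rw [← h2] at h1
    have h3 : (t - t0) * (n x t - n y t - δ * (log (R + 1) - log x + (t - t0))
      - (A + 1 / (2 * (t - t0))) * (y - x)) ≤ 0 := by linarith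
    linarith [nonpos_of_mul_nonpos_right h3 hτ]
  have hlim : Tendsto (fun δ : ℝ => δ * (log (R + 1) - log x + (t - t0))) (𝓝[>] 0) (𝓝 0) := by
    have : Tendsto (fun δ : ℝ => δ * (log (R + 1) - log x + (t - t0))) (𝓝 0)
        (𝓝 (0 * (log (R + 1) - log x + (t - t0)))) := tendsto_id.mul_const _
    rw [zero_mul] at this
    exact this.mono_left nhdsWithin_le_nhds
  have := ge_of_tendsto hlim (eventually_mem_nhdsWithin.mono fun δ hδ => key δ hδ)
  linarith

theorem boundary_limit_exists
    (T : ℝ) (hT : 0 < T) (n : ℝ → ℝ → ℝ) (n₀ : ℝ → ℝ)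
    (hsol : IsKompSolOn n n₀ T)
    (hbdd : ∃ M : ℝ, ∀ x t : ℝ, 0 < x → 0 < t → t < T → n x t ≤ M)
    (h0nonneg : ∀ x : ℝ, 0 < x → 0 ≤ n₀ x)
    (h0bdd : ∃ C : ℝ, ∀ x : ℝ, 0 < x → n₀ x ≤ C)
    (h0decay : Filter.Tendsto (fun x => x ^ 2 * n₀ x) Filter.atTop (nhds 0)) :
    ∀ t : ℝ, 0 < t → t ≤ T →
      ∃ L : ℝ, Filter.Tendsto (fun x => n x t) (𝓝[>] (0:ℝ)) (nhds L) := by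
  obtain ⟨M, hM⟩ := hbdd
  -- the bound extends to `t = T` by continuity in time
  have hM' : ∀ x t, 0 < x → 0 < t → t ≤ T → n x t ≤ M := by
    intro x t hx ht htT
    have hc : Tendsto (fun s => n x s) (𝓝[<] t) (𝓝 (n x t)) :=
      (hsol.diff_t x hx t ht htT).continuousAt.tendsto.mono_left nhdsWithin_le_nhds
    refine le_of_tendsto hc ?_
    filter_upwards [Ioo_mem_nhdsLT ht] with s hs using
      hM x s hx hs.1 (hs.2.trans_le htT)
  intro t ht htT
  obtain ⟨φ, ρ, hρ, hO⟩ := oleinik_bound hsol hM' ht htT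
  have hmono : MonotoneOn (fun x => n x t + φ * x) (Ioo 0 ρ) := by
    intro x hx y hy hxy
    have := hO x y hx.1 hxy hy.2.le
    simp only
    linarith
  have hbelow : BddBelow ((fun x => n x t + φ * x) '' Ioo 0 ρ) := by
    refine ⟨-(|φ| * ρ), ?_⟩
    rintro _ ⟨x, hx, rfl⟩
    have h1 := hsol.nonneg x t hx.1 ht htT
    have h2 : |φ * x| ≤ |φ| * ρ := by
      rw [abs_mul, abs_of_pos hx.1]
      exact mul_le_mul_of_nonneg_left hx.2.le (abs_nonneg _)
    simp only
    linarith [neg_abs_le (φ * x)]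
  have hlim := hmono.tendsto_nhdsWithin_Ioo_right (nonempty_Ioo.mpr hρ) hbelow
  have hlin : Tendsto (fun x : ℝ => φ * x) (𝓝[>] 0) (𝓝 (φ * 0)) :=
    (tendsto_id.const_mul φ).mono_left nhdsWithin_le_nhds
  refine ⟨_, (hlim.sub hlin).congr fun x => ?_⟩
  ring
end

section
/- Persistence of photon loss: let n be a nonnegative bounded solution of the Kompaneets equation with initial data n₀ satisfying x² n₀(x) → 0 as x → ∞. Then there exists t* ∈ [0,∞] such that n(0,t) > 0 for every t > t* and n(0,t) = 0 for every t with 0 < t < t*. That is, once the boundary value n(0,·) becomes positive, it remains positive for all later times. -/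
/-!
Everything reduces to showing that `b t₀ > 0` forces `b t > 0` for all `t ≥ t₀`; then `t*` is the
infimum of the times at which `b` is positive.

In nondivergence form the equation reads `nₜ = x² nₓₓ + (x² + 2n) nₓ + (2x - 2) n`. If
`b t₀ > 0`, then `n(·,t₀) ≥ c > 0` on some `(0,δ]` with `δ ≤ 1`, and for `K = 4c + 2` the function
`w = c exp(-K(t - t₀)) (δ - x)²` is a subsolution on `(0,δ)` lying below `n` at `t = t₀` and at
`x = δ`. No boundary information at `x = 0` is needed: since `n ≥ 0`, the drift `x² + 2n` in front
of `nₓ` is nonnegative, so `ψ = 1 + 2(t - t₀) - log x`, which is decreasing in `x` and blows up at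
`x = 0`, is a supersolution of the linearised equation. A first-touching argument
(`barrier_lt`) gives `w - εψ < n` for every `ε > 0`. Letting `ε → 0` and then `x → 0` yields
`b t ≥ c δ² exp(-K(t - t₀)) > 0`.
-/

open MeasureTheory Filter Set Real Topology

/-- A (global-in-time) nonnegative solution of the Kompaneets equation
`∂ₜ n = ∂ₓ J(x, n(·,t))` on `(0,∞) × (0,∞)` with initial data `n₀`:
nonnegative, bounded, `C^{2,1}` in the interior, attaining the initial data,
continuous into `L¹`, and with `x² n → 0` and `x² ∂ₓ n → 0` as `x → ∞`,
uniformly on the indicated time sets.  No boundary condition at `x = 0`. -/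
structure IsKompSol (n : ℝ → ℝ → ℝ) (n₀ : ℝ → ℝ) : Prop where
  nonneg : ∀ x t : ℝ, 0 < x → 0 < t → 0 ≤ n x t
  bounded : ∃ M : ℝ, ∀ x t : ℝ, 0 < x → 0 < t → n x t ≤ M
  init : ∀ x : ℝ, 0 < x → n x 0 = n₀ x
  contOn : ContinuousOn (fun p : ℝ × ℝ => n p.1 p.2)
    ((Set.Ioi (0:ℝ)) ×ˢ (Set.Ioi (0:ℝ)))
  diff_x : ∀ t : ℝ, 0 < t → ∀ x : ℝ, 0 < x → DifferentiableAt ℝ (fun y => n y t) x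
  diff_xx : ∀ t : ℝ, 0 < t → ∀ x : ℝ, 0 < x →
    DifferentiableAt ℝ (deriv (fun y => n y t)) x
  diff_t : ∀ x : ℝ, 0 < x → ∀ t : ℝ, 0 < t → DifferentiableAt ℝ (fun τ => n x τ) t
  pde : ∀ x : ℝ, 0 < x → ∀ t : ℝ, 0 < t →
    deriv (fun τ => n x τ) t = deriv (fun y => kompFlux (fun z => n z t) y) x
  l1init : Filter.Tendsto (fun t => ∫ x in Set.Ioi (0:ℝ), |n x t - n₀ x|)
    (𝓝[>] (0:ℝ)) (nhds 0)
  decay : ∀ T : ℝ, 0 < T → ∀ ε : ℝ, 0 < ε → ∃ R : ℝ, 0 < R ∧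
    ∀ x : ℝ, R ≤ x → ∀ t : ℝ, 0 ≤ t → t < T → x ^ 2 * n x t < ε
  decay' : ∀ T : ℝ, 0 < T → ∀ ε : ℝ, 0 < ε → ∃ R : ℝ, 0 < R ∧
    ∀ x : ℝ, R ≤ x → ∀ t : ℝ, 1 / x ^ 2 ≤ t → t < T →
      |x ^ 2 * deriv (fun y => n y t) x| < ε

/-- Nondivergence form of the Kompaneets equation. -/
lemma komp_pde_expanded {n : ℝ → ℝ → ℝ} {n₀ : ℝ → ℝ} (h : IsKompSol n n₀) {x t : ℝ}
    (hx : 0 < x) (ht : 0 < t) :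
    deriv (fun τ => n x τ) t = x ^ 2 * deriv (deriv (fun y => n y t)) x
      + (x ^ 2 + 2 * n x t) * deriv (fun y => n y t) x + (2 * x - 2) * n x t := by
  rw [h.pde x hx t ht]
  have h1 := (h.diff_x t ht x hx).hasDerivAt
  have h2 := (h.diff_xx t ht x hx).hasDerivAt
  have hid := hasDerivAt_id' x
  have h3 := (((hid.fun_pow 2).fun_mul h2).fun_add
    (((hid.fun_pow 2).fun_sub (hid.const_mul 2)).fun_mul h1)).fun_add (h1.fun_pow 2)
  have h4 := h3.deriv
  simp only [kompFlux]
  rw [h4]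
  push_cast
  ring

lemma deriv_deriv_nonneg_of_isLocalMin {f : ℝ → ℝ} {x : ℝ} (hf : IsLocalMin f x)
    (hc : ContinuousAt f x) : 0 ≤ deriv (deriv f) x := by
  by_contra! hneg
  have hmax : IsLocalMax f x :=
    isLocalMax_of_deriv_deriv_neg hneg hf.deriv_eq_zero hc
  -- A point that is both a local minimum and a local maximum has `f` constant around it.
  have hconst : f =ᶠ[𝓝 x] fun _ => f x := by
    filter_upwards [hf, hmax] with y h1 h2
    exact le_antisymm h2 h1
  have := hconst.deriv.deriv_eq
  simp at this
  linarith

lemma hasDerivAt_nonpos_of_forall_lt {g : ℝ → ℝ} {g' s t : ℝ} (hst : s < t)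
    (hg : HasDerivAt g g' t) (hle : ∀ r, s < r → r < t → g t ≤ g r) : g' ≤ 0 := by
  have h1 := (hasDerivAt_iff_tendsto_slope.1 hg).mono_left
    (nhdsWithin_mono t (fun r (hr : r < t) => ne_of_lt hr) : 𝓝[<] t ≤ 𝓝[≠] t)
  refine le_of_tendsto h1 ?_
  filter_upwards [Ioo_mem_nhdsLT hst] with r hr
  rw [slope_def_field]
  exact div_nonpos_of_nonneg_of_nonpos (sub_nonneg.2 (hle r hr.1 hr.2)) (by linarith [hr.2])

/-- The differential inequalities contradicting a first touching of `n` and `w - εψ`, in terms of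
the values at that point: `a = c exp(-K(t - t₀))` and `ψ` are the values of the time factor of
the subsolution and of the penalty, and `nt`, `nx`, `nxx` the derivatives of `n`. -/
lemma no_touching {a c δ ε ψ x v nt nx nxx : ℝ} (ha : 0 ≤ a) (hac : a ≤ c) (hx : 0 < x)
    (hxδ : x < δ) (hδ : δ ≤ 1) (hε : 0 < ε) (hψ : 0 ≤ ψ) (hv : 0 ≤ v)
    (hveq : v = a * (δ - x) ^ 2 - ε * ψ)
    (hnx : nx = -2 * a * (δ - x) + ε / x)
    (hnxx : 2 * a - ε / x ^ 2 ≤ nxx)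
    (hnt : nt ≤ -(4 * c + 2) * a * (δ - x) ^ 2 - 2 * ε)
    (hpde : nt = x ^ 2 * nxx + (x ^ 2 + 2 * v) * nx + (2 * x - 2) * v) : False := by
  have h1 : 2 * a * x ^ 2 - ε ≤ x ^ 2 * nxx := by
    have := mul_le_mul_of_nonneg_left hnxx (sq_nonneg x)
    have e : x ^ 2 * (2 * a - ε / x ^ 2) = 2 * a * x ^ 2 - ε := by field_simp
    linarith
  have h2 : (x ^ 2 + 2 * v) * (-2 * a * (δ - x)) ≤ (x ^ 2 + 2 * v) * nx := by
    apply mul_le_mul_of_nonneg_left _ (by positivity)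
    have : 0 < ε / x := by positivity
    linarith
  obtain ⟨d, hd⟩ : ∃ d, d = δ - x := ⟨_, rfl⟩
  rw [← hd] at hveq hnt h2
  have hd0 : 0 < d := by linarith
  have hd1 : d ≤ 1 := by linarith
  have hεψ : 0 ≤ ε * ψ := by positivity
  have e1 : 0 ≤ a * x ^ 2 * (1 - d) := mul_nonneg (by positivity) (by linarith)
  have e2 : v * (4 * a * d) ≤ a * d ^ 2 * (4 * c) := by
    have : v ≤ a * d ^ 2 := by linarith
    have h3 : a * d ≤ c := by nlinarith
    exact mul_le_mul this (by linarith) (by positivity) (by positivity)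
  have e3 : -2 * (a * d ^ 2) ≤ (2 * x - 2) * v := by nlinarith
  nlinarith

/-- Penalised comparison: a solution lying above `c` on `(0,δ]` at time `t₀` stays strictly above
the subsolution `c exp(-(4c+2)(t-t₀)) (δ-x)²` minus `ε` times the singular penalty. -/
lemma barrier_lt {n : ℝ → ℝ → ℝ} {n₀ : ℝ → ℝ} (h : IsKompSol n n₀) {t₀ c δ ε : ℝ}
    (ht₀ : 0 < t₀) (hc : 0 ≤ c) (hδ1 : δ ≤ 1) (hε : 0 < ε)
    (hstart : ∀ x, 0 < x → x ≤ δ → c ≤ n x t₀) {x t : ℝ} (hx : 0 < x) (hxδ : x ≤ δ)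
    (ht : t₀ ≤ t) :
    c * exp (-(4 * c + 2) * (t - t₀)) * (δ - x) ^ 2 - ε * (1 + 2 * (t - t₀) - log x)
      < n x t := by
  by_contra! hcon
  -- The gap `m` between the solution and the penalised subsolution.
  obtain ⟨m, hm⟩ : ∃ m : ℝ × ℝ → ℝ, ∀ p, m p = n p.1 p.2 -
    (c * exp (-(4 * c + 2) * (p.2 - t₀)) * (δ - p.1) ^ 2
      - ε * (1 + 2 * (p.2 - t₀) - log p.1)) := ⟨_, fun _ => rfl⟩
  have hfac : ∀ s, t₀ ≤ s → c * exp (-(4 * c + 2) * (s - t₀)) ≤ c := by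
    intro s hs
    have : exp (-(4 * c + 2) * (s - t₀)) ≤ 1 := by
      rw [exp_le_one_iff]
      nlinarith
    nlinarith
  have hw : ∀ y s, 0 < y → y ≤ δ → t₀ ≤ s →
      c * exp (-(4 * c + 2) * (s - t₀)) * (δ - y) ^ 2 ≤ c := by
    intro y s hy hyδ hs
    have h1 : (δ - y) ^ 2 ≤ 1 := by nlinarith
    have h2 : 0 ≤ c * exp (-(4 * c + 2) * (s - t₀)) := by positivity
    nlinarith [hfac s hs]
  have hψ : ∀ y s, 0 < y → y ≤ δ → t₀ ≤ s → 1 ≤ 1 + 2 * (s - t₀) - log y := by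
    intro y s hy hyδ hs
    have := log_nonpos hy.le (hyδ.trans hδ1)
    linarith
  -- Left of `η` the penalty alone exceeds the subsolution.
  set η := min x (exp (-(c / ε))) with hη
  have hη0 : 0 < η := lt_min hx (exp_pos _)
  have hcont : ContinuousOn m (Icc η δ ×ˢ Icc t₀ t) := by
    have h1 : ContinuousOn (fun p : ℝ × ℝ => n p.1 p.2) (Icc η δ ×ˢ Icc t₀ t) :=
      h.contOn.mono (prod_mono (fun y hy => lt_of_lt_of_le hη0 hy.1)
        (fun s hs => lt_of_lt_of_le ht₀ hs.1))
    have h2 : ContinuousOn (fun p : ℝ × ℝ => log p.1) (Icc η δ ×ˢ Icc t₀ t) :=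
      continuousOn_fst.log (fun p hp => (lt_of_lt_of_le hη0 hp.1.1).ne')
    have h3 : ContinuousOn (fun p : ℝ × ℝ => n p.1 p.2 -
        (c * exp (-(4 * c + 2) * (p.2 - t₀)) * (δ - p.1) ^ 2
          - ε * (1 + 2 * (p.2 - t₀) - log p.1))) (Icc η δ ×ˢ Icc t₀ t) := by
      refine h1.sub (ContinuousOn.sub (by fun_prop) (continuousOn_const.mul ?_))
      exact ContinuousOn.sub (by fun_prop) h2
    exact h3.congr fun p _ => hm p
  obtain ⟨S, hS⟩ : ∃ S : Set (ℝ × ℝ), S = (Icc η δ ×ˢ Icc t₀ t) ∩ m ⁻¹' Iic 0 := ⟨_, rfl⟩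
  have hScomp : IsCompact S := by
    rw [hS]
    have hK : IsCompact (Icc η δ ×ˢ Icc t₀ t) := isCompact_Icc.prod isCompact_Icc
    exact hK.of_isClosed_subset
      (hcont.preimage_isClosed_of_isClosed hK.isClosed isClosed_Iic) inter_subset_left
  have hSne : S.Nonempty := by
    refine ⟨(x, t), ?_⟩
    rw [hS]
    refine ⟨⟨⟨min_le_left _ _, hxδ⟩, ⟨ht, le_rfl⟩⟩, ?_⟩
    simp only [mem_preimage, mem_Iic, hm]
    linarith
  -- A touching point with the smallest time coordinate.
  obtain ⟨⟨y, s⟩, hyS, hmin⟩ := hScomp.exists_isMinOn hSne continuousOn_snd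
  rw [hS] at hyS
  obtain ⟨⟨⟨hy1, hy2⟩, hs1, hs2⟩, hmys⟩ := hyS
  simp only [mem_preimage, mem_Iic] at hmys hy1 hy2 hs1 hs2
  have hy0 : 0 < y := lt_of_lt_of_le hη0 hy1
  have hs0 : 0 < s := lt_of_lt_of_le ht₀ hs1
  have hnn := h.nonneg y s hy0 hs0
  have hpen : ε ≤ ε * (1 + 2 * (s - t₀) - log y) := by nlinarith [hψ y s hy0 hy2 hs1]
  have hmys' := hmys
  rw [hm] at hmys'
  simp only at hmys'
  have hst : t₀ < s := by
    refine lt_of_le_of_ne hs1 fun e => ?_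
    subst e
    linarith [hw y t₀ hy0 hy2 le_rfl, hstart y hy0 hy2]
  have hyδ : y < δ := by
    refine lt_of_le_of_ne hy2 fun e => ?_
    subst e
    simp at hmys' hpen
    linarith
  have hyη : η < y := by
    refine lt_of_le_of_ne hy1 fun e => ?_
    have h1 : log y ≤ -(c / ε) := by
      rw [← log_exp (-(c / ε)), ← e]
      exact log_le_log hη0 (min_le_right _ _)
    have h2 : c + ε ≤ ε * (1 + 2 * (s - t₀) - log y) := by
      have : ε * (c / ε) = c := by field_simp
      nlinarith
    linarith [hw y s hy0 hy2 hs1]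
  have hbefore : ∀ z r, η ≤ z → z ≤ δ → t₀ ≤ r → r < s → 0 < m (z, r) := by
    intro z r hz1 hz2 hr1 hr2
    by_contra! hle
    have hmem : (z, r) ∈ S := by
      rw [hS]
      exact ⟨⟨⟨hz1, hz2⟩, hr1, by simp only; linarith⟩, hle⟩
    have h4 : s ≤ r := hmin hmem
    linarith
  have hat : ∀ z, η ≤ z → z ≤ δ → 0 ≤ m (z, s) := by
    intro z hz1 hz2
    have h1 : ContinuousOn (fun r => m (z, r)) (Icc t₀ t) :=
      hcont.comp (by fun_prop) (fun r hr => ⟨⟨hz1, hz2⟩, hr⟩)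
    have h2 : Tendsto (fun r => m (z, r)) (𝓝[Ioo t₀ s] s) (𝓝 (m (z, s))) :=
      (h1 s ⟨hs1, hs2⟩).mono_left
        (nhdsWithin_mono _ fun r hr => ⟨hr.1.le, hr.2.le.trans hs2⟩)
    have : (𝓝[Ioo t₀ s] s).NeBot := by
      rw [nhdsWithin_Ioo_eq_nhdsLT hst]
      infer_instance
    refine ge_of_tendsto h2 ?_
    filter_upwards [self_mem_nhdsWithin] with r hr
    exact (hbefore z r hz1 hz2 hr.1.le hr.2).le
  have hm0 : m (y, s) = 0 := le_antisymm hmys (hat y hy1 hy2)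
  have hloc : IsLocalMin (fun z => m (z, s)) y := by
    filter_upwards [Ioo_mem_nhds hyη hyδ] with z hz
    simp only [hm0]
    exact hat z hz.1.le hz.2.le
  obtain ⟨a, ha⟩ : ∃ a, a = c * exp (-(4 * c + 2) * (s - t₀)) := ⟨_, rfl⟩
  have hdx : ∀ z, 0 < z → HasDerivAt (fun z => m (z, s))
      (deriv (fun y => n y s) z + 2 * a * (δ - z) - ε / z) z := by
    intro z hz
    have h1 := (h.diff_x s hs0 z hz).hasDerivAt
    have h2 := (((hasDerivAt_id' z).const_sub δ).fun_pow 2).const_mul a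
    have h3 := ((hasDerivAt_log hz.ne').const_sub (1 + 2 * (s - t₀))).const_mul ε
    have h4 := h1.fun_sub (h2.fun_sub h3)
    simp only [hm, ← ha]
    refine h4.congr_deriv ?_
    push_cast
    field_simp
    ring
  have hdd : HasDerivAt (deriv (fun z => m (z, s)))
      (deriv (deriv (fun y => n y s)) y - 2 * a + ε / y ^ 2) y := by
    have h1 := (h.diff_xx s hs0 y hy0).hasDerivAt
    have h2 := ((hasDerivAt_id' y).const_sub δ).const_mul (2 * a)
    have h3 := (hasDerivAt_inv hy0.ne').const_mul ε
    have h4 := (h1.fun_add h2).fun_sub h3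
    have h5 : deriv (fun z => m (z, s)) =ᶠ[𝓝 y] fun z =>
        deriv (fun y => n y s) z + 2 * a * (δ - z) - ε * z⁻¹ := by
      filter_upwards [Ioi_mem_nhds hy0] with z hz
      rw [(hdx z hz).deriv, div_eq_mul_inv]
    refine (h4.congr_of_eventuallyEq h5).congr_deriv ?_
    field_simp
    ring
  have hdt : HasDerivAt (fun r => m (y, r))
      (deriv (fun τ => n y τ) s + (4 * c + 2) * a * (δ - y) ^ 2 + 2 * ε) s := by
    have h1 := (h.diff_t y hy0 s hs0).hasDerivAt
    have h0 := (hasDerivAt_id' s).sub_const t₀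
    have h2 := (((h0.const_mul (-(4 * c + 2))).exp.const_mul c).mul_const ((δ - y) ^ 2))
    have h3 := ((((h0.const_mul 2).const_add 1).sub_const (log y)).const_mul ε)
    have h4 := h1.fun_sub (h2.fun_sub h3)
    simp only [hm]
    refine h4.congr_deriv ?_
    rw [ha]
    ring
  have hx1 := hloc.hasDerivAt_eq_zero (hdx y hy0)
  have hx2 := deriv_deriv_nonneg_of_isLocalMin hloc (hdx y hy0).continuousAt
  rw [hdd.deriv] at hx2
  have ht1 := hasDerivAt_nonpos_of_forall_lt hst hdt fun r hr1 hr2 => by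
    rw [hm0]
    exact (hbefore y r hy1 hy2 hr1.le hr2).le
  rw [hm] at hm0
  simp only [← ha] at hm0
  exact no_touching (a := a) (ψ := 1 + 2 * (s - t₀) - log y) (by rw [ha]; positivity) (ha ▸ hfac s hs1)
    hy0 hyδ hδ1 hε (by linarith [hψ y s hy0 hy2 hs1]) hnn (by linarith) (by linarith) (by linarith)
    (by linarith) (komp_pde_expanded h hy0 hs0)

lemma boundary_value_pos_persists {n : ℝ → ℝ → ℝ} {n₀ : ℝ → ℝ} (h : IsKompSol n n₀) {b : ℝ → ℝ}
    (hb : ∀ t : ℝ, 0 < t → Tendsto (fun x => n x t) (𝓝[>] (0:ℝ)) (𝓝 (b t)))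
    {t₀ t : ℝ} (ht₀ : 0 < t₀) (ht : t₀ ≤ t) (hpos : 0 < b t₀) : 0 < b t := by
  obtain ⟨c, hc, hcb⟩ := exists_between hpos
  obtain ⟨δ', hδ', hsub⟩ := mem_nhdsGT_iff_exists_Ioc_subset.1
    ((hb t₀ ht₀).eventually (lt_mem_nhds hcb))
  obtain ⟨δ, hδ⟩ : ∃ δ, δ = min δ' 1 := ⟨_, rfl⟩
  have hδ0 : 0 < δ := hδ ▸ lt_min hδ' one_pos
  have hδ1 : δ ≤ 1 := hδ ▸ min_le_right _ _
  have hδδ' : δ ≤ δ' := hδ ▸ min_le_left _ _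
  have hstart : ∀ x, 0 < x → x ≤ δ → c ≤ n x t₀ := fun x hx hxδ =>
    le_of_lt (hsub ⟨hx, hxδ.trans hδδ'⟩)
  have hlow : ∀ x, 0 < x → x ≤ δ →
      c * exp (-(4 * c + 2) * (t - t₀)) * (δ - x) ^ 2 ≤ n x t := by
    intro x hx hxδ
    have hlim : Tendsto (fun ε : ℝ => c * exp (-(4 * c + 2) * (t - t₀)) * (δ - x) ^ 2
        - ε * (1 + 2 * (t - t₀) - log x)) (𝓝[>] 0)
        (𝓝 (c * exp (-(4 * c + 2) * (t - t₀)) * (δ - x) ^ 2)) := by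
      have : Continuous (fun ε : ℝ => c * exp (-(4 * c + 2) * (t - t₀)) * (δ - x) ^ 2
        - ε * (1 + 2 * (t - t₀) - log x)) := by fun_prop
      simpa using (this.tendsto 0).mono_left nhdsWithin_le_nhds
    refine le_of_tendsto hlim ?_
    filter_upwards [self_mem_nhdsWithin] with ε hε
    exact (barrier_lt h ht₀ hc.le hδ1 hε hstart hx hxδ ht).le
  have hlim0 : Tendsto (fun x : ℝ => c * exp (-(4 * c + 2) * (t - t₀)) * (δ - x) ^ 2)
      (𝓝[>] 0) (𝓝 (c * exp (-(4 * c + 2) * (t - t₀)) * δ ^ 2)) := by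
    have : Continuous (fun x : ℝ => c * exp (-(4 * c + 2) * (t - t₀)) * (δ - x) ^ 2) := by
      fun_prop
    simpa using (this.tendsto 0).mono_left nhdsWithin_le_nhds
  have hle := le_of_tendsto_of_tendsto hlim0 (hb t (ht₀.trans_le ht)) (by
    filter_upwards [Ioc_mem_nhdsGT hδ0] with x hx
    exact hlow x hx.1 hx.2)
  exact lt_of_lt_of_le (by positivity) hle

theorem persistence_of_photon_loss
    (n : ℝ → ℝ → ℝ) (n₀ : ℝ → ℝ)
    (hsol : IsKompSol n n₀)
    (h0nonneg : ∀ x : ℝ, 0 < x → 0 ≤ n₀ x)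
    (h0bdd : ∃ C : ℝ, ∀ x : ℝ, 0 < x → n₀ x ≤ C)
    (h0decay : Filter.Tendsto (fun x => x ^ 2 * n₀ x) Filter.atTop (nhds 0))
    (b : ℝ → ℝ)
    (hb : ∀ t : ℝ, 0 < t →
      Filter.Tendsto (fun x => n x t) (𝓝[>] (0:ℝ)) (nhds (b t)))
    :
    ∃ tstar : ENNReal, ∀ t : ℝ, 0 < t →
      ((tstar < ENNReal.ofReal t → 0 < b t) ∧
       (ENNReal.ofReal t < tstar → b t = 0)) := by
  refine ⟨sInf (Set.image ENNReal.ofReal {s | 0 < s ∧ 0 < b s}),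
    fun t ht => ⟨fun hlt => ?_, fun hlt => ?_⟩⟩
  · obtain ⟨_, ⟨s, ⟨hs, hbs⟩, rfl⟩, hst⟩ := sInf_lt_iff.1 hlt
    exact boundary_value_pos_persists hsol hb hs ((ENNReal.ofReal_lt_ofReal_iff ht).1 hst).le hbs
  · have hnn : 0 ≤ b t := ge_of_tendsto (hb t ht) (by
      filter_upwards [self_mem_nhdsWithin] with x hx
      exact hsol.nonneg x t hx ht)
    refine le_antisymm (not_lt.1 fun hbt => ?_) hnn
    exact (sInf_le (mem_image_of_mem ENNReal.ofReal
      (show t ∈ {s | 0 < s ∧ 0 < b s} from ⟨ht, hbt⟩))).not_gt hlt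
end
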